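/- Liouville redefinition of Hamiltonian triples: In the abstract variational bicomplex with contraction satisfying 2ι∘d_V∘ι = d_V∘ι∘ι + ι∘ι∘d_V, let ω ∈ ⊕_q Ω^{2,q} and let (L, θ) be a Hamiltonian triple for ω (d_V θ = ω and ι ω = d_V L + d_H θ). For any η ∈ ⊕_q Ω^{1,q}, define ℒ := ι∘d_V − d_V∘ι, ω̃ := ω + (d_H − ℒ) d_V η, θ̃ := θ − d_H η + ι d_V η, and L̃ := L + (1/2) ι ι d_V η. Then (L̃, θ̃) is a Hamiltonian triple for ω̃, i.e. d_V θ̃ = ω̃ and ι ω̃ = d_V L̃ + d_H θ̃. -/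

import Mathlib

/-- **Liouville redefinition of Hamiltonian triples**: if `(L, θ)` is a Hamiltonian triple
for `ω`, then for any `η ∈ ⊕_q Ω^{1,q}`, setting `ω̃ := ω + (d_H − ℒ) d_V η`,
`θ̃ := θ − d_H η + ι d_V η` and `L̃ := L + (1/2) ι ι d_V η`, the pair `(L̃, θ̃)` is a
Hamiltonian triple for `ω̃`. -/
theorem liouville_redefinition_of_hamiltonian_triples
    {R M : Type*} [CommRing R] [Invertible (2 : R)] [AddCommGroup M] [Module R M]
    -- the abstract variational bicomplex
    (n : ℤ) (Ω : ℤ → ℤ → Submodule R M)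
    (hint : DirectSum.IsInternal fun pq : ℤ × ℤ => Ω pq.1 pq.2)
    (hvan : ∀ p q : ℤ, (p < 0 ∨ q < 0 ∨ n < q) → Ω p q = ⊥)
    (dV dH : Module.End R M)
    (hdVdeg : ∀ p q : ℤ, ∀ x ∈ Ω p q, dV x ∈ Ω (p + 1) q)
    (hdHdeg : ∀ p q : ℤ, ∀ x ∈ Ω p q, dH x ∈ Ω p (q + 1))
    (hdV2 : dV * dV = 0) (hdH2 : dH * dH = 0)
    (hdVdH : dV * dH + dH * dV = 0)
    -- the contraction operator ι
    (ι : Module.End R M)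
    (hιdeg : ∀ p q : ℤ, ∀ x ∈ Ω p q, ι x ∈ Ω (p - 1) q)
    (hιdH : ι * dH = dH * ι)
    (hQQ : 2 • (ι * dV * ι) = dV * ι * ι + ι * ι * dV)
    -- ω and the Hamiltonian triple (L, θ)
    (ω L θ : M)
    (hω : ω ∈ ⨆ q : ℤ, Ω 2 q) (hL : L ∈ ⨆ q : ℤ, Ω 0 q) (hθ : θ ∈ ⨆ q : ℤ, Ω 1 q)
    (htriple₁ : dV θ = ω) (htriple₂ : ι ω = dV L + dH θ)
    -- η
    (η : M) (hη : η ∈ ⨆ q : ℤ, Ω 1 q) :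
    (let lie : Module.End R M := ι * dV - dV * ι
     let ω' : M := ω + (dH (dV η) - lie (dV η))
     let θ' : M := θ - dH η + ι (dV η)
     let L' : M := L + (⅟2 : R) • ι (ι (dV η))
     dV θ' = ω' ∧ ι ω' = dV L' + dH θ') := by
  intro lie ω' θ' L'
  have h1 : ∀ x, dV (dV x) = 0 := fun x => LinearMap.congr_fun hdV2 x
  have h2 : ∀ x, dH (dH x) = 0 := fun x => LinearMap.congr_fun hdH2 x
  have h3 : dV (dH η) = - dH (dV η) :=
    eq_neg_of_add_eq_zero_left (LinearMap.congr_fun hdVdH η)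
  have h4 : ∀ x, ι (dH x) = dH (ι x) := fun x => LinearMap.congr_fun hιdH x
  have h5 : (2 : R) • ι (dV (ι (dV η))) = dV (ι (ι (dV η))) := by
    have h := LinearMap.congr_fun hQQ (dV η)
    simp only [LinearMap.smul_apply, LinearMap.add_apply, Module.End.mul_apply, h1, map_zero,
      add_zero] at h
    rw [two_smul, ← two_nsmul]
    exact h
  have h6 : (⅟2 : R) • dV (ι (ι (dV η))) = ι (dV (ι (dV η))) := by
    rw [← h5, smul_smul, invOf_mul_self, one_smul]
  have hlie : lie (dV η) = - dV (ι (dV η)) := by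
    simp [lie, h1]
  constructor
  · simp only [θ', ω', hlie, map_add, map_sub, h3, htriple₁]
    abel
  · simp only [θ', ω', L', hlie, map_add, map_sub, map_neg, map_smul, h2, h4, h6, htriple₂]
    abel
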